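/- Fix a prime p and n ∈ ℕ, and let T_n be the presented R-module described below. Then T_n is self-dual: there is an isomorphism of R-modules between T_n and its Pontryagin dual Hom_ℤ(T_n, ℚ/ℤ), where R acts on the dual by (r·f)(x) = f(r·x). -/

import Mathlib

open Polynomial Finsupp

noncomputable section

/-- The ideal `(p) ⊆ ℤ` is prime when `p` is a natural prime. -/
instance spanNatPrimeInt (p : ℕ) [hp : Fact p.Prime] :
    (Ideal.span {(p : ℤ)}).IsPrime := by
  rw [Ideal.span_singleton_prime (by exact_mod_cast hp.out.ne_zero)]
  exact Int.prime_iff_natAbs_prime.2 (by simpa using hp.out)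

/-- Words on the alphabet `{0, 1, …, p−1}`. -/
abbrev Word (p : ℕ) : Type := List (Fin p)

/-- The letter `p − 1`. -/
def lastLetter (p : ℕ) [hp : Fact p.Prime] : Fin p :=
  ⟨p - 1, by have := hp.out.pos; omega⟩

/-- The letter `0`. -/
def zeroLetter (p : ℕ) [hp : Fact p.Prime] : Fin p := ⟨0, hp.out.pos⟩

/-- The defining relations of the module `T_n` over `R = Zp[v]` (with `v = X`):
(i) `g_w` for every word `w` with `|w| > n`; and
(ii) for every `w` with `|w| ≤ n+1`, the element
`p·g_w − v^(p^(n−|w|+2))·g_{w'} − g_{w·0}` if `w = w'·(p−1)` ends in `p−1`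
(equivalently, for every `w'` with `|w'| ≤ n`, taking `w = w'·(p−1)` of length
`|w'|+1`, so that `n−|w|+2 = n+1−|w'|`), and `p·g_w − g_{w·0}` otherwise. -/
def rels (p : ℕ) [Fact p.Prime] (Zp : Type) [CommRing Zp] (n : ℕ) :
    Set (Word p →₀ Polynomial Zp) :=
  {x | ∃ w : Word p, n < w.length ∧ x = single w 1} ∪
  {x | ∃ w' : Word p, w'.length ≤ n ∧
      x = single (w' ++ [lastLetter p]) (p : Polynomial Zp)
        - single w' (X ^ p ^ (n + 1 - w'.length))
        - single ((w' ++ [lastLetter p]) ++ [zeroLetter p]) 1} ∪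
  {x | ∃ w : Word p, w.length ≤ n + 1 ∧ (∀ w' : Word p, w ≠ w' ++ [lastLetter p]) ∧
      x = single w (p : Polynomial Zp) - single (w ++ [zeroLetter p]) 1}

/-- The torsion module `T_n` of Angeltveit–Hill–Lawson: the quotient of the
free `Zp[v]`-module on the words `{g_w : w ∈ W}` by the relations `rels`. -/
abbrev T (p : ℕ) [Fact p.Prime] (Zp : Type) [CommRing Zp] (n : ℕ) : Type :=
  (Word p →₀ Polynomial Zp) ⧸ Submodule.span (Polynomial Zp) (rels p Zp n)

/-- The generator `g_w` of `T_n`. -/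
def g (p : ℕ) [Fact p.Prime] (Zp : Type) [CommRing Zp] (n : ℕ) (w : Word p) :
    T p Zp n :=
  Submodule.Quotient.mk (single w (1 : Polynomial Zp))

/-!
Write `S = ℤ_(p)`. On the generators of `T_n`, multiplication by `p` is the shift `s` that sends
`g_w` to `g_{w·0}`, plus `v ^ p ^ (n + 1 - |w'|) g_{w'}` if `w = w'·(p - 1)`. The relations imply
that `v ^ e_k` kills `g_w` for `|w| = k`, where `e_k = p + p ^ 2 + ⋯ + p ^ (n + 1 - k)`, so `T_n` is
the cokernel of `D = p - s` on `F = ⨁ S[v] / (v ^ e_|w|)`. Replacing each letter `a` by `p - 1 - a`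
exchanges the two terms of `s`, and therefore `D` is self-adjoint for the pairing of `g_w` with
`g_{w̄}` that reads off the coefficient of `v ^ (e_|w| - 1)`. Composed with a character that embeds
`S / p ^ N` in `ℚ / ℤ`, this pairing is perfect modulo `p ^ N`. Finally `s` is nilpotent on `F`, so
for large `N` the operator `D` divides `p ^ N - s ^ N = p ^ N`. Given a factorization
`D D' = D' D = p ^ N`, the map `x ↦ ⟨D' x, ·⟩` identifies the cokernel of `D` with its dual.
-/

open scoped Pointwise

section CharacterAnnihilator

variable {R P : Type*} [CommRing R] [AddCommGroup P] [Module R P]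

/-- The characters of `P` that vanish on the submodule `L`. -/
def characterAnnihilator (L : Submodule R P) : Submodule R (CharacterModule P) :=
  LinearMap.ker (CharacterModule.dual L.subtype)

theorem mem_characterAnnihilator {L : Submodule R P} {ψ : CharacterModule P} :
    ψ ∈ characterAnnihilator L ↔ ∀ x ∈ L, ψ x = 0 :=
  ⟨fun h x hx => DFunLike.congr_fun h ⟨x, hx⟩, fun h => CharacterModule.ext _ fun x => h x x.2⟩

theorem characterAnnihilator_anti {L L' : Submodule R P} (h : L ≤ L') :
    characterAnnihilator L' ≤ characterAnnihilator L := fun _ hψ =>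
  mem_characterAnnihilator.2 fun x hx => mem_characterAnnihilator.1 hψ x (h hx)

theorem characterAnnihilator_sup (L L' : Submodule R P) :
    characterAnnihilator (L ⊔ L') = characterAnnihilator L ⊓ characterAnnihilator L' := by
  refine le_antisymm (le_inf (characterAnnihilator_anti le_sup_left)
    (characterAnnihilator_anti le_sup_right)) fun ψ hψ => mem_characterAnnihilator.2 fun x hx => ?_
  obtain ⟨y, hy, z, hz, rfl⟩ := Submodule.mem_sup.1 hx
  rw [map_add, mem_characterAnnihilator.1 hψ.1 y hy, mem_characterAnnihilator.1 hψ.2 z hz,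
    add_zero]

theorem mem_characterAnnihilator_range {Q : Type*} [AddCommGroup Q] [Module R Q] {f : Q →ₗ[R] P}
    {ψ : CharacterModule P} :
    ψ ∈ characterAnnihilator f.range ↔ CharacterModule.dual f ψ = 0 := by
  rw [mem_characterAnnihilator]
  refine ⟨fun h => CharacterModule.ext _ fun x => h _ (LinearMap.mem_range_self f x), ?_⟩
  rintro h _ ⟨x, rfl⟩
  exact DFunLike.congr_fun h x

theorem range_dual_mkQ (L : Submodule R P) :
    (CharacterModule.dual L.mkQ).range = characterAnnihilator L := by
  refine le_antisymm ?_ fun ψ hψ => ?_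
  · rintro _ ⟨φ, rfl⟩
    refine mem_characterAnnihilator.2 fun x hx => ?_
    have hx' : L.mkQ x = 0 := by simpa using hx
    exact (congrArg φ hx').trans (map_zero φ)
  · exact ⟨QuotientAddGroup.lift L.toAddSubgroup ψ (mem_characterAnnihilator.1 hψ), rfl⟩

/-- The character module of `P ⧸ L` as a submodule of the character module of `P`. -/
def characterModuleQuotientEquiv (L : Submodule R P) :
    CharacterModule (P ⧸ L) ≃ₗ[R] characterAnnihilator L :=
  LinearEquiv.ofInjective _ (CharacterModule.dual_injective_of_surjective _ L.mkQ_surjective) ≪≫ₗ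
    LinearEquiv.ofEq _ _ (range_dual_mkQ L)

end CharacterAnnihilator

section MatrixFactorization

variable {R P : Type*} [CommRing R] [AddCommGroup P] [Module R P]

/-- The endomorphisms `D` and `D'` of `P` induce a matrix factorization of `q` on `P ⧸ K`: both
composites of the induced endomorphisms are multiplication by `q`. -/
structure IsMatrixFactorization (K : Submodule R P) (q : R) (D D' : Module.End R P) : Prop where
  le_comap_left : K ≤ K.comap D
  le_comap_right : K ≤ K.comap D'
  left_right_sub_mem : ∀ x, D (D' x) - q • x ∈ K
  right_left_sub_mem : ∀ x, D' (D x) - q • x ∈ K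

namespace IsMatrixFactorization

variable {K : Submodule R P} {q : R} {D D' : Module.End R P}

theorem symm (h : IsMatrixFactorization K q D D') : IsMatrixFactorization K q D' D :=
  ⟨h.le_comap_right, h.le_comap_left, h.right_left_sub_mem, h.left_right_sub_mem⟩

theorem smul_top_le_sup_range (h : IsMatrixFactorization K q D D') : q • ⊤ ≤ K ⊔ D.range := by
  rintro _ ⟨x, -, rfl⟩
  change q • x ∈ _
  rw [← sub_sub_cancel (D (D' x)) (q • x)]
  exact sub_mem (Submodule.mem_sup_right ⟨_, rfl⟩)
    (Submodule.mem_sup_left (h.left_right_sub_mem x))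

theorem comap_sup_smul_top (h : IsMatrixFactorization K q D D') (hq : ∀ x, q • x ∈ K → x ∈ K) :
    (K ⊔ q • ⊤).comap D = K ⊔ D'.range := by
  refine le_antisymm (fun x hx => ?_) (sup_le (h.le_comap_left.trans ?_) ?_)
  · obtain ⟨k, hk, _, ⟨y, -, rfl⟩, hxy⟩ := Submodule.mem_sup.1 (Submodule.mem_comap.1 hx)
    change k + q • y = D x at hxy
    have hmem : x - D' y ∈ K := by
      refine hq _ ?_
      have hsub : q • (x - D' y) = D' k - (D' (D x) - q • x) := by
        rw [← hxy, map_add, map_smul, smul_sub]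
        abel
      rw [hsub]
      exact sub_mem (h.le_comap_right hk) (h.right_left_sub_mem x)
    rw [← sub_add_cancel x (D' y)]
    exact add_mem (Submodule.mem_sup_left hmem) (Submodule.mem_sup_right ⟨y, rfl⟩)
  · exact Submodule.comap_mono le_sup_left
  · rintro _ ⟨y, rfl⟩
    rw [Submodule.mem_comap, ← sub_add_cancel (D (D' y)) (q • y)]
    exact add_mem (Submodule.mem_sup_left (h.left_right_sub_mem y))
      (Submodule.mem_sup_right (Submodule.smul_mem_pointwise_smul y q ⊤ trivial))

theorem range_comp_eq_characterAnnihilator (h : IsMatrixFactorization K q D D')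
    (hq : ∀ x, q • x ∈ K → x ∈ K) (θ : P →ₗ[R] CharacterModule P) (hker : θ.ker = K ⊔ q • ⊤)
    (hrange : θ.range = characterAnnihilator θ.ker)
    (hadj : ∀ x, θ (D x) = CharacterModule.dual D (θ x)) :
    (θ ∘ₗ D').range = characterAnnihilator (K ⊔ D.range) := by
  have hcomap : θ.ker.comap D = K ⊔ D'.range := by rw [hker, h.comap_sup_smul_top hq]
  have hKker : K ≤ θ.ker := hker ▸ le_sup_left
  refine le_antisymm ?_ fun ψ hψ => ?_
  · rintro _ ⟨y, rfl⟩
    have hK : θ (D' y) ∈ characterAnnihilator K :=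
      characterAnnihilator_anti hKker (hrange ▸ LinearMap.mem_range_self θ _)
    have hDD' : θ (D (D' y)) = 0 := hcomap.ge (Submodule.mem_sup_right ⟨y, rfl⟩)
    rw [LinearMap.comp_apply, characterAnnihilator_sup, Submodule.mem_inf,
      mem_characterAnnihilator_range, ← hadj]
    exact ⟨hK, hDD'⟩
  · have hle : θ.ker ≤ K ⊔ D.range := hker ▸ sup_le le_sup_left h.smul_top_le_sup_range
    obtain ⟨z, rfl⟩ : ψ ∈ θ.range := hrange ▸ characterAnnihilator_anti hle hψ
    have hz : θ (D z) = 0 := by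
      rw [hadj, ← mem_characterAnnihilator_range]
      exact characterAnnihilator_anti le_sup_right hψ
    obtain ⟨k, hk, _, ⟨y, rfl⟩, rfl⟩ := Submodule.mem_sup.1 (hcomap.le hz)
    exact ⟨y, by rw [LinearMap.comp_apply, map_add, hKker hk, zero_add]⟩

theorem nonempty_equiv_characterModule (h : IsMatrixFactorization K q D D')
    (hq : ∀ x, q • x ∈ K → x ∈ K) (θ : P →ₗ[R] CharacterModule P) (hker : θ.ker = K ⊔ q • ⊤)
    (hrange : θ.range = characterAnnihilator θ.ker)
    (hadj : ∀ x, θ (D x) = CharacterModule.dual D (θ x)) :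
    Nonempty ((P ⧸ (K ⊔ D.range)) ≃ₗ[R] CharacterModule (P ⧸ (K ⊔ D.range))) := by
  have hker' : (θ ∘ₗ D').ker = K ⊔ D.range := by
    rw [LinearMap.ker_comp, hker, h.symm.comap_sup_smul_top hq]
  have hrange' := h.range_comp_eq_characterAnnihilator hq θ hker hrange hadj
  exact ⟨Submodule.quotEquivOfEq _ _ hker'.symm ≪≫ₗ (θ ∘ₗ D').quotKerEquivRange ≪≫ₗ
    LinearEquiv.ofEq _ _ hrange' ≪≫ₗ (characterModuleQuotientEquiv _).symm⟩

end IsMatrixFactorization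

theorem exists_isMatrixFactorization_pow {K : Submodule R P} {s : Module.End R P}
    (hK : K ≤ K.comap s) {N : ℕ} (hs : ∀ x, (s ^ N) x ∈ K) (r : R) :
    ∃ D', IsMatrixFactorization K (r ^ N) (algebraMap R (Module.End R P) r - s) D' := by
  have hcomm : Commute (algebraMap R (Module.End R P) r) s := Algebra.commutes r s
  refine ⟨∑ i ∈ Finset.range N, algebraMap R (Module.End R P) r ^ i * s ^ (N - 1 - i),
    fun x hx => ?_, fun x hx => ?_, fun x => ?_, fun x => ?_⟩
  · exact sub_mem (K.smul_mem r hx) (hK hx)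
  · rw [Submodule.mem_comap, LinearMap.sum_apply]
    refine sum_mem fun i _ => ?_
    rw [← map_pow]
    exact K.smul_mem _ (K.le_comap_pow_of_le_comap hK _ hx)
  · rw [← Module.End.mul_apply, hcomm.mul_geom_sum₂, ← map_pow, LinearMap.sub_apply,
      Module.algebraMap_end_apply, sub_sub_cancel_left]
    exact neg_mem (hs x)
  · rw [← Module.End.mul_apply, hcomm.geom_sum₂_mul, ← map_pow, LinearMap.sub_apply,
      Module.algebraMap_end_apply, sub_sub_cancel_left]
    exact neg_mem (hs x)

end MatrixFactorization

section DualGenerator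

/-- The character `c` of `R` has annihilator `I` and generates the module of characters of `R`
that are killed by `I`; equivalently, `1 ↦ c` induces an isomorphism of `R ⧸ I` with its dual. -/
structure IsDualGenerator {R : Type*} [CommRing R] (I : Ideal R) (c : CharacterModule R) :
    Prop where
  smul_eq_zero_iff : ∀ r : R, r • c = 0 ↔ r ∈ I
  exists_eq_smul : ∀ ψ ∈ characterAnnihilator I, ∃ r : R, ψ = r • c

variable {R : Type*} [CommRing R]

theorem IsDualGenerator.smul_mem_characterAnnihilator {I : Ideal R} {c : CharacterModule R}
    (h : IsDualGenerator I c) (r : R) : r • c ∈ characterAnnihilator I := by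
  refine mem_characterAnnihilator.2 fun s hs => ?_
  rw [CharacterModule.smul_apply, smul_eq_mul, mul_comm]
  exact DFunLike.congr_fun ((h.smul_eq_zero_iff s).2 hs) r

theorem exists_isDualGenerator_bot (hgen : ∀ r : R, r ∈ AddSubgroup.zmultiples (1 : R))
    (hfin : IsOfFinAddOrder (1 : R)) : ∃ φ, IsDualGenerator (⊥ : Ideal R) φ := by
  set m := addOrderOf (1 : R)
  have hm_pos : 0 < m := hfin.addOrderOf_pos
  let u : AddCircle (1 : ℚ) := ((1 / m : ℚ) : AddCircle (1 : ℚ))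
  have hu : addOrderOf u = m := AddCircle.addOrderOf_period_div hm_pos
  let φ : R →+ AddCircle (1 : ℚ) := addMonoidHomOfForallMemZMultiples hgen hu.dvd
  have hφ : φ 1 = u := addMonoidHomOfForallMemZMultiples_apply_gen hgen hu.dvd
  refine ⟨φ, fun r => ⟨fun hr => ?_, ?_⟩, fun ψ _ => ?_⟩
  · obtain ⟨k, rfl : k • (1 : R) = r⟩ := hgen r
    have hku : φ ((k • (1 : R)) * 1) = 0 := DFunLike.congr_fun hr 1
    rwa [mul_one, map_zsmul, hφ, ← addOrderOf_dvd_iff_zsmul_eq_zero, hu,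
      addOrderOf_dvd_iff_zsmul_eq_zero] at hku
  · rintro rfl
    exact zero_smul R _
  · have hψ : m • ψ 1 = 0 := by rw [← map_nsmul, addOrderOf_nsmul_eq_zero, map_zero]
    obtain ⟨a, -, ha⟩ := (AddCircle.nsmul_eq_zero_iff hm_pos).1 hψ
    refine ⟨a, (AddMonoidHom.eq_iff_eq_on_generator hgen _ _).2 ?_⟩
    change ψ 1 = φ (a * 1)
    rw [← nsmul_eq_mul, map_nsmul, hφ, ← ha, ← AddCircle.coe_nsmul, nsmul_eq_mul, mul_one,
      mul_one_div]

theorem IsDualGenerator.dual_mkQ {I : Ideal R} {φ : CharacterModule (R ⧸ I)}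
    (h : IsDualGenerator ⊥ φ) : IsDualGenerator I (CharacterModule.dual I.mkQ φ) := by
  have hsmul (r : R) : CharacterModule.dual I.mkQ (Ideal.Quotient.mk I r • φ) =
      r • CharacterModule.dual I.mkQ φ := rfl
  refine ⟨fun r => ?_, fun ψ hψ => ?_⟩
  · have hinj := CharacterModule.dual_injective_of_surjective I.mkQ I.mkQ_surjective
    rw [← hsmul, map_eq_zero_iff _ hinj, h.smul_eq_zero_iff, Ideal.mem_bot,
      Ideal.Quotient.eq_zero_iff_mem]
  · rw [← range_dual_mkQ] at hψ
    obtain ⟨ψ', rfl⟩ := hψ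
    obtain ⟨r', rfl⟩ := h.exists_eq_smul ψ'
      (mem_characterAnnihilator.2 (by rintro _ rfl; exact map_zero ψ'))
    obtain ⟨r, rfl⟩ := Ideal.Quotient.mk_surjective r'
    exact ⟨r, hsmul r⟩

theorem exists_isDualGenerator {I : Ideal R} (hI : ∀ r : R, ∃ m : ℤ, r - m ∈ I)
    (hfin : IsOfFinAddOrder (1 : R ⧸ I)) : ∃ χ, IsDualGenerator I χ := by
  have hgen (x : R ⧸ I) : x ∈ AddSubgroup.zmultiples (1 : R ⧸ I) := by
    obtain ⟨r, rfl⟩ := Ideal.Quotient.mk_surjective x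
    obtain ⟨m, hm⟩ := hI r
    refine AddSubgroup.mem_zmultiples_iff.2 ⟨m, ?_⟩
    rw [zsmul_one, ← map_intCast (Ideal.Quotient.mk I), eq_comm, Ideal.Quotient.eq]
    exact hm
  obtain ⟨φ, hφ⟩ := exists_isDualGenerator_bot hgen hfin
  exact ⟨_, hφ.dual_mkQ⟩

end DualGenerator

section PrimePower

theorem exists_pow_dvd_sub_intCast {S : Type*} [CommRing S] {q : ℕ}
    (h : ∀ s : S, ∃ m : ℤ, (q : S) ∣ s - m) (N : ℕ) (s : S) :
    ∃ m : ℤ, (q : S) ^ N ∣ s - m := by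
  induction N with
  | zero => exact ⟨0, by simp⟩
  | succ N ih =>
    obtain ⟨m, t, ht⟩ := ih
    obtain ⟨k, u, hu⟩ := h t
    refine ⟨m + q ^ N * k, u, ?_⟩
    push_cast
    linear_combination ht + (q : S) ^ N * hu

theorem exists_isDualGenerator_span_pow {S : Type*} [CommRing S] {q : ℕ} (hq : q ≠ 0)
    (h : ∀ s : S, ∃ m : ℤ, (q : S) ∣ s - m) (N : ℕ) :
    ∃ χ, IsDualGenerator (Ideal.span {(q : S) ^ N}) χ := by
  refine exists_isDualGenerator (fun s => ?_)
    (isOfFinAddOrder_iff_nsmul_eq_zero.2 ⟨q ^ N, by positivity, ?_⟩)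
  · simpa only [Ideal.mem_span_singleton] using exists_pow_dvd_sub_intCast h N s
  · rw [nsmul_one, ← map_natCast (Ideal.Quotient.mk _), Ideal.Quotient.eq_zero_iff_mem,
      Nat.cast_pow]
    exact Ideal.mem_span_singleton_self _

end PrimePower

section TruncatedPolynomial

variable {S : Type*} [CommRing S]

/-- The character of `S[X]` that reads off the coefficient of `X ^ (e - 1)` and applies `χ`.
Multiplying by `X` first makes it the zero character for `e = 0`. -/
def topCoeffCharacter (χ : CharacterModule S) (e : ℕ) : CharacterModule S[X] :=
  AddMonoidHom.comp χ ((lcoeff S e).comp (LinearMap.mulLeft S X)).toAddMonoidHom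

theorem topCoeffCharacter_apply (χ : CharacterModule S) (e : ℕ) (f : S[X]) :
    topCoeffCharacter χ e f = χ ((X * f).coeff e) := rfl

theorem X_pow_smul_topCoeffCharacter_add (χ : CharacterModule S) (e k : ℕ) :
    (X ^ k : S[X]) • topCoeffCharacter χ (e + k) = topCoeffCharacter χ e := by
  refine CharacterModule.ext _ fun f => ?_
  rw [CharacterModule.smul_apply, topCoeffCharacter_apply, topCoeffCharacter_apply, smul_eq_mul,
    mul_left_comm, coeff_X_pow_mul]

theorem topCoeffCharacter_mul_monomial (χ : CharacterModule S) {e i j : ℕ} (h : i + j + 1 = e)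
    (f : S[X]) (s : S) : topCoeffCharacter χ e (f * monomial j s) = (f.coeff i • χ) s := by
  rw [topCoeffCharacter_apply, ← h, coeff_X_mul, coeff_mul_monomial, CharacterModule.smul_apply,
    smul_eq_mul]

theorem C_smul_topCoeffCharacter (χ : CharacterModule S) (e : ℕ) (q : S) :
    C q • topCoeffCharacter χ e = topCoeffCharacter (q • χ) e := by
  refine CharacterModule.ext _ fun f => ?_
  rw [CharacterModule.smul_apply, topCoeffCharacter_apply, topCoeffCharacter_apply, smul_eq_mul,
    mul_left_comm, coeff_C_mul, CharacterModule.smul_apply, smul_eq_mul]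

theorem topCoeffCharacter_zero_left (e : ℕ) : topCoeffCharacter (0 : CharacterModule S) e = 0 :=
  rfl

theorem topCoeffCharacter_zero_right (χ : CharacterModule S) : topCoeffCharacter χ 0 = 0 := by
  refine CharacterModule.ext _ fun f => ?_
  rw [topCoeffCharacter_apply, coeff_X_mul_zero]
  exact map_zero χ

theorem exists_coeff_eq_of_lt (c : ℕ → S) (e : ℕ) : ∃ f : S[X], ∀ i < e, f.coeff i = c i :=
  ⟨PowerSeries.trunc e (PowerSeries.mk c), fun i hi => by
    rw [PowerSeries.coeff_trunc, if_pos hi, PowerSeries.coeff_mk]⟩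

theorem mem_span_C_X_pow_of_dvd_coeff {q : S} {e : ℕ} {f : S[X]} (h : ∀ i < e, q ∣ f.coeff i) :
    f ∈ Ideal.span {C q, X ^ e} := by
  choose! c hc using h
  obtain ⟨f', hf'⟩ := exists_coeff_eq_of_lt c e
  obtain ⟨r, hr⟩ : X ^ e ∣ f - C q * f' := X_pow_dvd_iff.2 fun i hi => by
    rw [coeff_sub, coeff_C_mul, hf' i hi, ← hc i hi, sub_self]
  exact Ideal.mem_span_pair.2 ⟨f', r, by linear_combination -hr⟩

theorem smul_topCoeffCharacter_eq_zero_iff {q : S} {χ : CharacterModule S}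
    (hχ : IsDualGenerator (Ideal.span {q}) χ) {e : ℕ} {f : S[X]} :
    f • topCoeffCharacter χ e = 0 ↔ f ∈ Ideal.span {C q, X ^ e} := by
  refine ⟨fun hf => mem_span_C_X_pow_of_dvd_coeff fun i hi => ?_, fun hf => ?_⟩
  · rw [← Ideal.mem_span_singleton, ← hχ.smul_eq_zero_iff]
    refine CharacterModule.ext _ fun s => ?_
    rw [← topCoeffCharacter_mul_monomial χ (show i + (e - 1 - i) + 1 = e by omega)]
    exact DFunLike.congr_fun hf _
  · have hX : (X ^ e : S[X]) • topCoeffCharacter χ e = 0 := by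
      simpa only [zero_add, topCoeffCharacter_zero_right] using
        X_pow_smul_topCoeffCharacter_add χ 0 e
    have hq : (C q : S[X]) • topCoeffCharacter χ e = 0 := by
      rw [C_smul_topCoeffCharacter, (hχ.smul_eq_zero_iff q).2 (Ideal.mem_span_singleton_self q),
        topCoeffCharacter_zero_left]
    obtain ⟨a, b, rfl⟩ := Ideal.mem_span_pair.1 hf
    rw [add_smul, mul_smul, mul_smul, hX, hq, smul_zero, smul_zero, add_zero]

theorem isDualGenerator_topCoeffCharacter {q : S} {χ : CharacterModule S}
    (hχ : IsDualGenerator (Ideal.span {q}) χ) (e : ℕ) :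
    IsDualGenerator (Ideal.span {C q, X ^ e}) (topCoeffCharacter χ e) := by
  refine ⟨fun f => smul_topCoeffCharacter_eq_zero_iff hχ, fun ψ hψ => ?_⟩
  have hψq (i : ℕ) :
      CharacterModule.dual (monomial i) ψ ∈ characterAnnihilator (Ideal.span {q}) := by
    refine mem_characterAnnihilator.2 fun r hr => ?_
    obtain ⟨t, rfl⟩ := Ideal.mem_span_singleton.1 hr
    refine mem_characterAnnihilator.1 hψ _ ?_
    change monomial i (q * t) ∈ _
    rw [← C_mul_monomial]
    exact Ideal.mul_mem_right _ _ (Ideal.subset_span (by simp))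
  choose c hc using fun i => hχ.exists_eq_smul _ (hψq i)
  obtain ⟨f, hf⟩ := exists_coeff_eq_of_lt (fun i => c (e - 1 - i)) e
  refine ⟨f, addHom_ext fun i s => ?_⟩
  by_cases hi : i < e
  · have hsum : e - 1 - i + i + 1 = e := by omega
    have hsub : e - 1 - (e - 1 - i) = i := by omega
    refine Eq.trans ?_ (topCoeffCharacter_mul_monomial χ hsum f s).symm
    rw [hf _ (by omega), hsub, ← hc]
    rfl
  · have hdvd : monomial i s ∈ Ideal.span {C q, X ^ e} := by
      refine mem_span_C_X_pow_of_dvd_coeff fun j hj => ?_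
      rw [coeff_monomial_of_ne _ (by omega)]
      exact dvd_zero q
    have hχi := DFunLike.congr_fun ((smul_topCoeffCharacter_eq_zero_iff hχ).2 hdvd) f
    rw [CharacterModule.smul_apply, smul_eq_mul, mul_comm] at hχi
    exact (mem_characterAnnihilator.1 hψ _ hdvd).trans hχi.symm

end TruncatedPolynomial

section TwistedPairing

variable {R ι : Type*} [CommRing R]

/-- The restriction `r ↦ ψ (r • single i 1)` of a character `ψ` to the `i`-th coordinate. -/
def coordCharacter (i : ι) : CharacterModule (ι →₀ R) →ₗ[R] CharacterModule R :=
  CharacterModule.dual (lsingle i)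

theorem coordCharacter_apply (i : ι) (ψ : CharacterModule (ι →₀ R)) (r : R) :
    coordCharacter i ψ r = ψ (single i r) := rfl

theorem coordCharacter_ext {ψ ψ' : CharacterModule (ι →₀ R)}
    (h : ∀ i, coordCharacter i ψ = coordCharacter i ψ') : ψ = ψ' :=
  Finsupp.addHom_ext fun i r => DFunLike.congr_fun (h i) r

theorem mem_characterAnnihilator_submodule {I : ι → Ideal R} {ψ : CharacterModule (ι →₀ R)} :
    ψ ∈ characterAnnihilator (Finsupp.submodule I) ↔
      ∀ i, coordCharacter i ψ ∈ characterAnnihilator (I i) := by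
  simp only [mem_characterAnnihilator, Finsupp.mem_submodule_iff]
  refine ⟨fun h i r hr => h _ fun j => ?_, fun h x hx => ?_⟩
  · obtain rfl | hij := eq_or_ne i j
    · simpa using hr
    · simp [hij]
  · rw [← Finsupp.sum_single x, Finsupp.sum, map_sum]
    exact Finset.sum_eq_zero fun i _ => h i _ (hx i)

/-- The pairing `⟨x, y⟩ = ∑ i, c i (x (σ i) * y i)` on `ι →₀ R`, as a map `x ↦ ⟨x, ·⟩`. -/
def twistedPairing (σ : Equiv.Perm ι) (c : ι → CharacterModule R) :
    (ι →₀ R) →ₗ[R] CharacterModule (ι →₀ R) :=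
  Finsupp.linearCombination R fun j =>
    CharacterModule.dual (lapply (R := R) (σ.symm j)) (c (σ.symm j))

variable {σ : Equiv.Perm ι} {c : ι → CharacterModule R}

theorem twistedPairing_single_apply (i : ι) (y : ι →₀ R) :
    twistedPairing σ c (single (σ i) 1) y = c i (y i) := by
  rw [twistedPairing, linearCombination_single, one_smul, σ.symm_apply_apply]
  rfl

theorem coordCharacter_twistedPairing (i : ι) (x : ι →₀ R) :
    coordCharacter i (twistedPairing σ c x) = x (σ i) • c i := by
  suffices h : coordCharacter i ∘ₗ twistedPairing σ c =
      LinearMap.toSpanSingleton R _ (c i) ∘ₗ lapply (σ i) from LinearMap.congr_fun h x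
  refine Finsupp.lhom_ext' fun k => LinearMap.ext_ring ?_
  obtain ⟨j, rfl⟩ := σ.surjective k
  refine CharacterModule.ext _ fun r => ?_
  simp only [LinearMap.comp_apply, lsingle_apply]
  rw [coordCharacter_apply, twistedPairing_single_apply]
  change c j (single i r j) = c i (single (σ j) 1 (σ i) * r)
  obtain rfl | hij := eq_or_ne i j
  · simp
  · simp [hij]

variable {I : ι → Ideal R}

theorem ker_twistedPairing (hc : ∀ i, IsDualGenerator (I i) (c i)) (hI : ∀ i, I (σ i) = I i) :
    (twistedPairing σ c).ker = Finsupp.submodule I := by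
  ext x
  have hx : twistedPairing σ c x = 0 ↔ ∀ i, x (σ i) • c i = 0 := by
    simp only [← coordCharacter_twistedPairing]
    exact ⟨fun h i => by rw [h, map_zero], fun h => coordCharacter_ext fun i => by
      rw [h, map_zero]⟩
  rw [LinearMap.mem_ker, hx, Finsupp.mem_submodule_iff]
  refine σ.forall_congr fun i => ?_
  rw [(hc i).smul_eq_zero_iff, hI]

theorem range_twistedPairing (hc : ∀ i, IsDualGenerator (I i) (c i))
    (hfin : {i | I i ≠ ⊤}.Finite) :
    (twistedPairing σ c).range = characterAnnihilator (Finsupp.submodule I) := by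
  refine le_antisymm ?_ fun ψ hψ => ?_
  · rintro _ ⟨x, rfl⟩
    refine mem_characterAnnihilator_submodule.2 fun i => ?_
    rw [coordCharacter_twistedPairing]
    exact (hc i).smul_mem_characterAnnihilator _
  · have hr (i : ι) : ∃ r : R, coordCharacter i ψ = r • c i ∧
        (I i = ⊤ → r = 0) := by
      have hψi := mem_characterAnnihilator_submodule.1 hψ i
      by_cases hi : I i = ⊤
      · refine ⟨0, ?_, fun _ => rfl⟩
        rw [zero_smul]
        exact CharacterModule.ext _ fun s => mem_characterAnnihilator.1 hψi s (by simp [hi])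
      · obtain ⟨r, hr⟩ := (hc i).exists_eq_smul _ hψi
        exact ⟨r, hr, fun h => absurd h hi⟩
    choose r hr hr0 using hr
    let y : ι →₀ R := Finsupp.onFinset hfin.toFinset r fun i hi => by
      simpa using mt (hr0 i) hi
    refine ⟨y.equivMapDomain σ, coordCharacter_ext fun i => ?_⟩
    rw [coordCharacter_twistedPairing, Finsupp.equivMapDomain_apply, σ.symm_apply_apply, hr]
    rfl

theorem twistedPairing_apply_eq_dual {D : Module.End R (ι →₀ R)}
    (hD : ∀ i j, D (single (σ i) 1) (σ j) • c j = D (single j 1) i • c i) (x : ι →₀ R) :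
    twistedPairing σ c (D x) = CharacterModule.dual D (twistedPairing σ c x) := by
  suffices h : twistedPairing σ c ∘ₗ D = CharacterModule.dual D ∘ₗ twistedPairing σ c from
    LinearMap.congr_fun h x
  refine Finsupp.lhom_ext' fun k => LinearMap.ext_ring ?_
  obtain ⟨i, rfl⟩ := σ.surjective k
  refine coordCharacter_ext fun j => ?_
  simp only [LinearMap.comp_apply, lsingle_apply]
  rw [coordCharacter_twistedPairing, hD]
  refine CharacterModule.ext _ fun r => ?_
  have hr : D (single j r) = r • D (single j 1) := by
    rw [← map_smul, Finsupp.smul_single, smul_eq_mul, mul_one]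
  refine Eq.trans ?_ (twistedPairing_single_apply i (D (single j r))).symm
  rw [hr, CharacterModule.smul_apply, Finsupp.smul_apply, smul_eq_mul, smul_eq_mul, mul_comm]

end TwistedPairing

section FinsuppSubmodule

variable {R ι : Type*} [CommRing R]

theorem submodule_span_singleton_le_iff {f : ι → R} {N : Submodule R (ι →₀ R)} :
    Finsupp.submodule (fun i => Ideal.span {f i}) ≤ N ↔ ∀ i, single i (f i) ∈ N := by
  simp_rw [Finsupp.submodule_eq_iSup, iSup_le_iff, Ideal.span, Submodule.map_span,
    Set.image_singleton, Submodule.span_singleton_le_iff_mem, lsingle_apply]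

theorem single_X_pow_mem_of_le {S : Type*} [CommRing S] {N : Submodule S[X] (ι →₀ S[X])} {i : ι}
    {j k : ℕ} (hjk : j ≤ k) (h : single i (X ^ j) ∈ N) : single i (X ^ k) ∈ N := by
  rw [← Nat.sub_add_cancel hjk, pow_add, ← smul_eq_mul, ← Finsupp.smul_single]
  exact N.smul_mem _ h

theorem smul_top_finsupp (r : R) :
    r • (⊤ : Submodule R (ι →₀ R)) = Finsupp.submodule fun _ => Ideal.span {r} := by
  refine le_antisymm ?_ (submodule_span_singleton_le_iff.2 fun i => ?_)
  · rintro _ ⟨x, -, rfl⟩ i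
    exact Ideal.mem_span_singleton.2 (dvd_mul_right r (x i))
  · rw [← smul_single_one]
    exact Submodule.smul_mem_pointwise_smul (single i 1) r ⊤ Submodule.mem_top

theorem submodule_sup (I J : ι → Ideal R) :
    Finsupp.submodule I ⊔ Finsupp.submodule J = Finsupp.submodule (I ⊔ J) := by
  simp_rw [Finsupp.submodule_eq_iSup, ← iSup_sup_eq, Pi.sup_apply, Submodule.map_sup]

end FinsuppSubmodule

section Words

variable {p : ℕ}

theorem length_append_letter (w : Word p) (i : Fin p) : (w ++ [i]).length = w.length + 1 :=
  List.length_append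

/-- The bijection `w ↦ w̄` of words that replaces each letter `a` by `p - 1 - a`. -/
def revWord : Equiv.Perm (Word p) := Equiv.listEquivOfEquiv Fin.revPerm

theorem length_revWord (w : Word p) : (revWord w).length = w.length := List.length_map _

theorem revWord_append_lastLetter [Fact p.Prime] (w : Word p) :
    revWord (w ++ [lastLetter p]) = revWord w ++ [zeroLetter p] := by
  have hrev : Fin.rev (lastLetter p) = zeroLetter p := by
    ext
    simp [zeroLetter, lastLetter, Fin.val_rev, Nat.sub_add_cancel (NeZero.one_le (n := p))]
  simp [revWord, Equiv.listEquivOfEquiv, hrev]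

theorem revWord_append_zeroLetter [Fact p.Prime] (w : Word p) :
    revWord (w ++ [zeroLetter p]) = revWord w ++ [lastLetter p] := by
  have hrev : Fin.rev (zeroLetter p) = lastLetter p := by
    ext
    simp [zeroLetter, lastLetter, Fin.val_rev]
  simp [revWord, Equiv.listEquivOfEquiv, hrev]

/-- The exponent `p + p ^ 2 + ⋯ + p ^ (n + 1 - k)` of the power of `v` that annihilates the
generators `g_w` of `T_n` with `|w| = k`. -/
def truncExp (p n k : ℕ) : ℕ := ∑ i ∈ Finset.range (n + 1 - k), p ^ (i + 1)

theorem truncExp_of_lt {n k : ℕ} (h : n < k) : truncExp p n k = 0 := by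
  rw [truncExp, Nat.sub_eq_zero_of_le h, Finset.sum_range_zero]

theorem truncExp_of_le {n k : ℕ} (h : k ≤ n) :
    truncExp p n k = truncExp p n (k + 1) + p ^ (n + 1 - k) := by
  obtain ⟨d, rfl⟩ := Nat.exists_eq_add_of_le h
  rw [truncExp, truncExp, show k + d + 1 - k = d + 1 by omega,
    show k + d + 1 - (k + 1) = d by omega, Finset.sum_range_succ]

theorem truncExp_antitone (n : ℕ) : Antitone (truncExp p n) := fun _ _ h =>
  Finset.sum_le_sum_of_subset (Finset.range_mono (by omega))

theorem truncExp_le_truncExp_succ_add (n k : ℕ) :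
    truncExp p n k ≤ truncExp p n (k + 1) + p ^ (n + 1 - k) := by
  obtain hk | hk := le_or_gt k n
  · exact (truncExp_of_le hk).le
  · simp [truncExp_of_lt hk]

theorem X_pow_smul_topCoeffCharacter_truncExp {S : Type*} [CommRing S] (χ : CharacterModule S)
    (n k : ℕ) : (X ^ p ^ (n + 1 - k) : S[X]) • topCoeffCharacter χ (truncExp p n k) =
      topCoeffCharacter χ (truncExp p n (k + 1)) := by
  obtain hk | hk := le_or_gt k n
  · rw [truncExp_of_le hk, X_pow_smul_topCoeffCharacter_add]
  · rw [truncExp_of_lt hk, truncExp_of_lt (hk.trans k.lt_succ_self), topCoeffCharacter_zero_right,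
      smul_zero]

end Words

section WordPowSubmodule

variable (p : ℕ) (S : Type*) [CommRing S]

/-- The span of the elements `v ^ a_k g_w` with `|w| = k`. -/
def wordPowSubmodule (a : ℕ → ℕ) : Submodule S[X] (Word p →₀ S[X]) :=
  Finsupp.submodule fun w => Ideal.span {X ^ a w.length}

variable {p S}

theorem single_X_pow_mem_wordPowSubmodule {a : ℕ → ℕ} {w : Word p} {k : ℕ}
    (hk : a w.length ≤ k) : single w (X ^ k) ∈ wordPowSubmodule p S a :=
  single_X_pow_mem_of_le hk (submodule_span_singleton_le_iff.1 le_rfl w)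

theorem wordPowSubmodule_anti {a b : ℕ → ℕ} (h : b ≤ a) :
    wordPowSubmodule p S a ≤ wordPowSubmodule p S b :=
  submodule_span_singleton_le_iff.2 fun _ => single_X_pow_mem_wordPowSubmodule (h _)

theorem mem_wordPowSubmodule_of_C_smul_mem {q : S} (hq : q ∈ nonZeroDivisors S) {a : ℕ → ℕ}
    {x : Word p →₀ S[X]} (hx : (C q : S[X]) • x ∈ wordPowSubmodule p S a) :
    x ∈ wordPowSubmodule p S a := by
  intro w
  have hw := hx w
  simp only [Ideal.mem_span_singleton, X_pow_dvd_iff, Finsupp.smul_apply, smul_eq_mul,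
    coeff_C_mul] at hw ⊢
  exact fun i hi => (mul_left_mem_nonZeroDivisors_eq_zero_iff hq).1 (hw i hi)

theorem wordPowSubmodule_sup_C_smul_top (q : S) (a : ℕ → ℕ) :
    wordPowSubmodule p S a ⊔ (C q : S[X]) • ⊤ =
      Finsupp.submodule fun w : Word p => Ideal.span {C q, X ^ a w.length} := by
  rw [smul_top_finsupp, wordPowSubmodule, submodule_sup]
  congr 1
  funext w
  rw [Pi.sup_apply, Ideal.span_insert, sup_comm]

end WordPowSubmodule

section WordPairing

variable {p : ℕ} {S : Type*} [CommRing S] (n : ℕ)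

/-- The pairing of the words `g_w` and `g_{w̄}` by which `T_n` is self-dual: it sends
`(f g_{w̄}, h g_w)` to the value of `χ` on the coefficient of `f * h` of degree
`truncExp p n |w| - 1`. -/
def wordPairing (χ : CharacterModule S) : (Word p →₀ S[X]) →ₗ[S[X]]
    CharacterModule (Word p →₀ S[X]) :=
  twistedPairing revWord fun w => topCoeffCharacter χ (truncExp p n w.length)

variable {n} {q : S} {χ : CharacterModule S}

theorem ker_wordPairing (hχ : IsDualGenerator (Ideal.span {q}) χ) :
    (wordPairing n χ).ker = wordPowSubmodule p S (truncExp p n) ⊔ (C q : S[X]) • ⊤ := by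
  rw [wordPowSubmodule_sup_C_smul_top]
  exact ker_twistedPairing (fun w => isDualGenerator_topCoeffCharacter hχ _)
    fun w => by rw [length_revWord]

theorem range_wordPairing (hχ : IsDualGenerator (Ideal.span {q}) χ) :
    (wordPairing (p := p) n χ).range = characterAnnihilator (wordPairing n χ).ker := by
  rw [ker_wordPairing hχ, wordPowSubmodule_sup_C_smul_top]
  refine range_twistedPairing (fun w => isDualGenerator_topCoeffCharacter hχ _)
    ((List.finite_length_le (Fin p) n).subset fun w hw => ?_)
  by_contra hlt
  refine hw ?_
  rw [truncExp_of_lt (not_le.1 hlt), pow_zero, Ideal.span_insert, Ideal.span_singleton_one,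
    sup_top_eq]

end WordPairing

section WordShift

variable (p : ℕ) [Fact p.Prime] (S : Type*) [CommRing S] (n : ℕ)

/-- The operator by which `p` acts on the generators of `T_n`: it maps `g_w` to `g_{w·0}`, plus
`v ^ p ^ (n + 1 - |w'|) g_{w'}` if `w = w'·(p - 1)`. -/
def wordShift : Module.End S[X] (Word p →₀ S[X]) :=
  Finsupp.linearCombination S[X] fun w =>
    single (w ++ [zeroLetter p]) 1 + if w.getLast? = some (lastLetter p) then
      single w.dropLast (X ^ p ^ (n + 1 - w.dropLast.length)) else 0

variable {p S n}

theorem wordShift_single_append_lastLetter (w : Word p) (f : S[X]) :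
    wordShift p S n (single (w ++ [lastLetter p]) f) =
      single (w ++ [lastLetter p] ++ [zeroLetter p]) f +
        single w (f * X ^ p ^ (n + 1 - w.length)) := by
  simp [wordShift, Finsupp.linearCombination_single]

theorem wordShift_single_of_ne {w : Word p} (hw : ∀ w' : Word p, w ≠ w' ++ [lastLetter p])
    (f : S[X]) : wordShift p S n (single w f) = single (w ++ [zeroLetter p]) f := by
  have hlast : w.getLast? ≠ some (lastLetter p) := fun h => by
    obtain ⟨w', hw'⟩ := List.getLast?_eq_some_iff.1 h
    exact hw w' hw'
  simp [wordShift, Finsupp.linearCombination_single, hlast]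

theorem wordShift_single_one_apply (w u : Word p) :
    wordShift p S n (single w 1) u = (if u = w ++ [zeroLetter p] then 1 else 0) +
      if w = u ++ [lastLetter p] then X ^ p ^ (n + 1 - u.length) else 0 := by
  by_cases hw : ∃ w', w = w' ++ [lastLetter p]
  · obtain ⟨w, rfl⟩ := hw
    rw [wordShift_single_append_lastLetter, Finsupp.add_apply, Finsupp.single_apply,
      Finsupp.single_apply, one_mul]
    simp only [List.append_cancel_right_eq, eq_comm (b := u)]
    congr 1
    split_ifs with h
    · rw [h]
    · rfl
  · push Not at hw
    rw [wordShift_single_of_ne hw, Finsupp.single_apply, if_neg (hw u), add_zero]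
    simp only [eq_comm]

theorem wordPairing_wordShift (χ : CharacterModule S) (x : Word p →₀ S[X]) :
    wordPairing n χ (wordShift p S n x) =
      CharacterModule.dual (wordShift p S n) (wordPairing n χ x) := by
  refine twistedPairing_apply_eq_dual (fun w u => ?_) x
  simp only [wordShift_single_one_apply, ← revWord_append_zeroLetter, ← revWord_append_lastLetter,
    revWord.injective.eq_iff, length_revWord]
  rw [add_smul, add_smul, add_comm]
  congr 1
  all_goals
    split_ifs with h
    · rw [X_pow_smul_topCoeffCharacter_truncExp, one_smul, h, length_append_letter]
    · rw [zero_smul, zero_smul]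

theorem wordPowSubmodule_le_comap_wordShift {a b : ℕ → ℕ} (hzero : ∀ k, b (k + 1) ≤ a k)
    (hlast : ∀ k, b k ≤ a (k + 1) + p ^ (n + 1 - k)) :
    wordPowSubmodule p S a ≤ (wordPowSubmodule p S b).comap (wordShift p S n) := by
  refine submodule_span_singleton_le_iff.2 fun w => ?_
  rw [Submodule.mem_comap]
  by_cases hw : ∃ w', w = w' ++ [lastLetter p]
  · obtain ⟨w, rfl⟩ := hw
    rw [wordShift_single_append_lastLetter, ← pow_add, length_append_letter]
    refine add_mem (single_X_pow_mem_wordPowSubmodule ?_) (single_X_pow_mem_wordPowSubmodule ?_)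
    · rw [length_append_letter, length_append_letter]
      exact hzero _
    · exact hlast _
  · push Not at hw
    rw [wordShift_single_of_ne hw]
    refine single_X_pow_mem_wordPowSubmodule ?_
    rw [length_append_letter]
    exact hzero _

theorem wordPowSubmodule_truncExp_le_comap_wordShift :
    wordPowSubmodule p S (truncExp p n) ≤
      (wordPowSubmodule p S (truncExp p n)).comap (wordShift p S n) :=
  wordPowSubmodule_le_comap_wordShift (fun k => truncExp_antitone n k.le_succ)
    (truncExp_le_truncExp_succ_add n)

theorem wordShift_pow_mem_wordPowSubmodule (k : ℕ) (x : Word p →₀ S[X]) :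
    (wordShift p S n ^ k) x ∈ wordPowSubmodule p S fun l => min (truncExp p n l) (k - l) := by
  induction k with
  | zero =>
    intro w
    simp only [Nat.zero_sub, Nat.min_zero, pow_zero, Ideal.span_singleton_one, Submodule.mem_top]
  | succ k ih =>
    rw [pow_succ', Module.End.mul_apply]
    refine Submodule.mem_comap.1 (wordPowSubmodule_le_comap_wordShift
      (a := fun l => min (truncExp p n l) (k - l)) (fun l => ?_) (fun l => ?_) ih)
    · have hanti := truncExp_antitone (p := p) n (Nat.le_add_right l 1)
      omega
    · obtain hl | hl := le_or_gt l n
      · have hexp := truncExp_of_le (p := p) hl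
        have htwo : 2 ≤ p ^ (n + 1 - l) :=
          (Fact.out : p.Prime).two_le.trans (Nat.le_self_pow (by omega) p)
        omega
      · rw [truncExp_of_lt hl, Nat.zero_min]
        exact Nat.zero_le _

theorem wordShift_pow_mem_wordPowSubmodule_truncExp (x : Word p →₀ S[X]) :
    (wordShift p S n ^ (truncExp p n 0 + n)) x ∈ wordPowSubmodule p S (truncExp p n) := by
  refine wordPowSubmodule_anti (fun l => ?_) (wordShift_pow_mem_wordPowSubmodule _ x)
  obtain hl | hl := le_or_gt l n
  · have hanti := truncExp_antitone (p := p) n l.zero_le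
    change truncExp p n l ≤ min (truncExp p n l) (truncExp p n 0 + n - l)
    omega
  · rw [truncExp_of_lt hl]
    exact Nat.zero_le _

end WordShift

section WordRelation

variable (p : ℕ) [Fact p.Prime] (S : Type*) [CommRing S] (n : ℕ)

/-- The operator `p - s`, where `s` is the shift of words. Its values on the words are the relations
of `T_n` of the second kind. -/
def wordRelation : Module.End S[X] (Word p →₀ S[X]) :=
  algebraMap S[X] _ (p : S[X]) - wordShift p S n

variable {p S n}

theorem wordRelation_apply (x : Word p →₀ S[X]) :
    wordRelation p S n x = (p : S[X]) • x - wordShift p S n x := rfl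

theorem wordRelation_single_append_lastLetter (w : Word p) :
    wordRelation p S n (single (w ++ [lastLetter p]) 1) =
      single (w ++ [lastLetter p]) (p : S[X]) - single w (X ^ p ^ (n + 1 - w.length)) -
        single (w ++ [lastLetter p] ++ [zeroLetter p]) 1 := by
  rw [wordRelation_apply, wordShift_single_append_lastLetter, smul_single_one, one_mul]
  abel

theorem wordRelation_single_of_ne {w : Word p} (hw : ∀ w' : Word p, w ≠ w' ++ [lastLetter p]) :
    wordRelation p S n (single w 1) = single w (p : S[X]) - single (w ++ [zeroLetter p]) 1 := by
  rw [wordRelation_apply, wordShift_single_of_ne hw, smul_single_one]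

theorem wordPairing_wordRelation (χ : CharacterModule S) (x : Word p →₀ S[X]) :
    wordPairing n χ (wordRelation p S n x) =
      CharacterModule.dual (wordRelation p S n) (wordPairing n χ x) := by
  refine CharacterModule.ext _ fun y => ?_
  rw [wordRelation_apply, map_sub, map_smul, wordPairing_wordShift]
  exact (map_sub (wordPairing n χ x) _ _).symm

theorem exists_isMatrixFactorization_wordRelation :
    ∃ N D', IsMatrixFactorization (wordPowSubmodule p S (truncExp p n)) (C ((p : S) ^ N))
      (wordRelation p S n) D' := by
  obtain ⟨D', hD'⟩ := exists_isMatrixFactorization_pow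
    (wordPowSubmodule_truncExp_le_comap_wordShift (p := p) (S := S) (n := n))
    wordShift_pow_mem_wordPowSubmodule_truncExp (p : S[X])
  refine ⟨truncExp p n 0 + n, D', ?_⟩
  rwa [map_pow, C_eq_natCast]

end WordRelation

section SpanRels

variable {p : ℕ} [Fact p.Prime] {S : Type} [CommRing S] {n : ℕ}

theorem single_mem_span_rels_of_lt {w : Word p} (hw : n < w.length) (f : S[X]) :
    single w f ∈ Submodule.span S[X] (rels p S n) := by
  rw [← smul_single_one]
  exact Submodule.smul_mem _ f (Submodule.subset_span (Or.inl (Or.inl ⟨w, hw, rfl⟩)))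

theorem wordRelation_single_mem_span_rels (w : Word p) :
    wordRelation p S n (single w 1) ∈ Submodule.span S[X] (rels p S n) := by
  have hlong {i : Fin p} {w : Word p} (hw : n < w.length) (f : S[X]) :
      single (w ++ [i]) f ∈ Submodule.span S[X] (rels p S n) :=
    single_mem_span_rels_of_lt (hw.trans_le (by simp)) f
  by_cases hw : ∃ w', w = w' ++ [lastLetter p]
  · obtain ⟨w, rfl⟩ := hw
    rw [wordRelation_single_append_lastLetter]
    obtain hn | hn := le_or_gt w.length n
    · exact Submodule.subset_span (Or.inl (Or.inr ⟨w, hn, rfl⟩))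
    · exact sub_mem (sub_mem (hlong hn _) (single_mem_span_rels_of_lt hn _))
        (hlong (hn.trans_le (by simp)) _)
  · push Not at hw
    rw [wordRelation_single_of_ne hw]
    obtain hn | hn := le_or_gt w.length n
    · exact Submodule.subset_span (Or.inr ⟨w, hn.trans n.le_succ, hw, rfl⟩)
    · exact sub_mem (single_mem_span_rels_of_lt hn _) (hlong hn _)

theorem range_wordRelation_le_span_rels :
    (wordRelation p S n).range ≤ Submodule.span S[X] (rels p S n) := by
  rw [LinearMap.range_eq_map, ← Finsupp.basisSingleOne.span_eq, Submodule.map_span_le]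
  rintro _ ⟨w, rfl⟩
  rw [coe_basisSingleOne]
  exact wordRelation_single_mem_span_rels w

theorem single_X_pow_truncExp_mem_span_rels (w : Word p) :
    single w (X ^ truncExp p n w.length) ∈ Submodule.span S[X] (rels p S n) := by
  induction hd : n + 1 - w.length using Nat.strong_induction_on generalizing w with
  | _ d ih =>
    obtain hn | hn := lt_or_ge n w.length
    · exact single_mem_span_rels_of_lt hn _
    let f : S[X] := X ^ truncExp p n (w.length + 1)
    have hlonger (u : Word p) (hu : w.length < u.length) :
        single u (X ^ truncExp p n u.length) ∈ Submodule.span S[X] (rels p S n) :=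
      ih _ (by omega) u rfl
    have hlast := hlonger (w ++ [lastLetter p]) (by simp)
    have hzero := hlonger (w ++ [lastLetter p] ++ [zeroLetter p]) (by simp)
    rw [length_append_letter] at hlast
    rw [length_append_letter, length_append_letter] at hzero
    replace hzero := single_X_pow_mem_of_le (truncExp_antitone n (Nat.le_succ _)) hzero
    have hrel := wordRelation_single_mem_span_rels (S := S) (n := n) (w ++ [lastLetter p])
    have hw : single w (X ^ truncExp p n w.length) =
        (p : S[X]) • single (w ++ [lastLetter p]) f -
          single (w ++ [lastLetter p] ++ [zeroLetter p]) f -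
          f • wordRelation p S n (single (w ++ [lastLetter p]) 1) := by
      rw [wordRelation_single_append_lastLetter, truncExp_of_le hn, pow_add]
      simp only [smul_sub, Finsupp.smul_single, smul_eq_mul, mul_comm f, one_mul]
      rw [mul_comm f]
      abel
    rw [hw]
    exact sub_mem (sub_mem (Submodule.smul_mem _ _ hlast) hzero) (Submodule.smul_mem _ _ hrel)

theorem span_rels : Submodule.span S[X] (rels p S n) =
    wordPowSubmodule p S (truncExp p n) ⊔ (wordRelation p S n).range := by
  refine le_antisymm (Submodule.span_le.2 ?_)
    (sup_le (submodule_span_singleton_le_iff.2 single_X_pow_truncExp_mem_span_rels)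
      range_wordRelation_le_span_rels)
  rintro _ ((⟨w, hw, rfl⟩ | ⟨w, -, rfl⟩) | ⟨w, -, hw, rfl⟩)
  · rw [← pow_zero X]
    exact Submodule.mem_sup_left (single_X_pow_mem_wordPowSubmodule (truncExp_of_lt hw).le)
  · exact Submodule.mem_sup_right ⟨_, wordRelation_single_append_lastLetter w⟩
  · exact Submodule.mem_sup_right ⟨_, wordRelation_single_of_ne hw⟩

end SpanRels

section Localization

variable (p : ℕ) [Fact p.Prime] (S : Type*) [CommRing S] [Algebra ℤ S]
  [IsLocalization.AtPrime S (Ideal.span {(p : ℤ)})]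

theorem natCast_mem_nonZeroDivisors_of_isLocalization_atPrime :
    (p : S) ∈ nonZeroDivisors S := by
  have hp : (p : ℤ) ∈ nonZeroDivisors ℤ :=
    mem_nonZeroDivisors_of_ne_zero (Nat.cast_ne_zero.2 (Fact.out : p.Prime).ne_zero)
  have hmap := IsLocalization.map_nonZeroDivisors_le (Ideal.span {(p : ℤ)}).primeCompl S
    (Submonoid.mem_map_of_mem _ hp)
  rwa [← map_natCast (algebraMap ℤ S)]

theorem exists_natCast_dvd_sub_intCast_of_isLocalization_atPrime (s : S) :
    ∃ m : ℤ, (p : S) ∣ s - m := by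
  let P : Ideal ℤ := Ideal.span {(p : ℤ)}
  have hP : P.IsMaximal := Ideal.IsPrime.isMaximal inferInstance
    (by simpa [P, Ideal.span_singleton_eq_bot] using (Fact.out : p.Prime).ne_zero)
  have hlocal : IsLocalRing S := IsLocalization.AtPrime.isLocalRing S P
  obtain ⟨x, hx⟩ := (IsLocalization.AtPrime.equivQuotMaximalIdeal P S).surjective
    (Ideal.Quotient.mk _ s)
  obtain ⟨m, rfl⟩ := Ideal.Quotient.mk_surjective x
  rw [IsLocalization.AtPrime.equivQuotMaximalIdeal_apply_mk, eq_comm, Ideal.Quotient.eq,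
    ← IsLocalization.AtPrime.map_eq_maximalIdeal P S, Ideal.map_span, Set.image_singleton,
    map_natCast, Ideal.mem_span_singleton, eq_intCast] at hx
  exact ⟨m, hx⟩

end Localization

theorem stmt17_general (p : ℕ) [Fact p.Prime] (S : Type) [CommRing S]
    (hreg : (p : S) ∈ nonZeroDivisors S) (hres : ∀ s : S, ∃ m : ℤ, (p : S) ∣ s - m) (n : ℕ) :
    Nonempty (T p S n ≃ₗ[S[X]] CharacterModule (T p S n)) := by
  obtain ⟨N, D', hD'⟩ := exists_isMatrixFactorization_wordRelation (p := p) (S := S) (n := n)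
  obtain ⟨χ, hχ⟩ :=
    exists_isDualGenerator_span_pow (Fact.out : p.Prime).ne_zero hres N
  unfold T
  rw [span_rels]
  exact hD'.nonempty_equiv_characterModule
    (fun _ => mem_wordPowSubmodule_of_C_smul_mem (pow_mem hreg N)) (wordPairing n χ)
    (ker_wordPairing hχ) (range_wordPairing hχ) (wordPairing_wordRelation χ)

/-- For any realization `Zp` of `ℤ_(p)`, the module `T_n` is self-dual: it is
isomorphic as an `R = Zp[v]`-module to its Pontryagin dual
`Hom_ℤ(T_n, ℚ/ℤ)`, where `R` acts on the dual by `(r • f) x = f (r • x)`. -/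
theorem stmt17 (p : ℕ) [Fact p.Prime] (Zp : Type) [CommRing Zp] [Algebra ℤ Zp]
    [IsLocalization.AtPrime Zp (Ideal.span {(p : ℤ)})] (n : ℕ) :
    Nonempty (T p Zp n ≃ₗ[Polynomial Zp] CharacterModule (T p Zp n)) :=
  stmt17_general p Zp (natCast_mem_nonZeroDivisors_of_isLocalization_atPrime p Zp)
    (exists_natCast_dvd_sub_intCast_of_isLocalization_atPrime p Zp) n

end
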